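/- Fix T, S > 0 and let σ : [0,S] → [0,T] be a strictly increasing differentiable bijection with σ(0) = 0 whose derivative σ' is uniformly bounded away from zero and infinity (i.e., 0 < inf_{t∈[0,S]} σ'(t) and sup_{t∈[0,S]} σ'(t) < ∞). For a continuous θ : [0,T] → 𝒳ₙ define the time-changed function θ̂_t := θ_{σ(t)} for t ∈ [0,S]. Then J_T(θ) < ∞ if and only if J_S(θ̂) < ∞. -/

import Mathlib

open MeasureTheory Filter Set
open scoped Real Topology ENNReal Classical

noncomputable section

/-- The configuration space `𝒳ₙ` of `n` ordered points on (a lift of) the circle: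
`θ¹ < θ² < ⋯ < θⁿ < θ¹ + 2π`. -/
def Xspace (n : ℕ) : Set (Fin n → ℝ) :=
  {x | StrictMono x ∧ ∀ i j : Fin n, x i < x j + 2 * π}

/-- The value `θ^{j+1}`, with the convention `θ^{n+1} = θ¹ + 2π`. -/
def nextVal {n : ℕ} (x : Fin n → ℝ) (j : Fin n) : ℝ :=
  if h : (j : ℕ) + 1 < n then x ⟨(j : ℕ) + 1, h⟩ else x ⟨0, j.pos⟩ + 2 * π

/-- The gap `θ^{j+1} - θ^j` (with wrap-around convention). -/
def gap {n : ℕ} (x : Fin n → ℝ) (j : Fin n) : ℝ := nextVal x j - x j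

/-- The minimal gap `Δ(θ) = min_j (θ^{j+1} - θ^j)`. -/
def minGap {n : ℕ} (x : Fin n → ℝ) : ℝ := ⨅ j : Fin n, gap x j

/-- `d(θ) := max_j |2π/n - (θ^{j+1} - θ^j)|`. -/
def dGap {n : ℕ} (x : Fin n → ℝ) : ℝ := ⨆ j : Fin n, |2 * π / n - gap x j|

/-- `φ^j(θ) = ∑_{k ≠ j} cot((θ^j - θ^k)/2)`. -/
def phi {n : ℕ} (x : Fin n → ℝ) (j : Fin n) : ℝ :=
  ∑ k ∈ Finset.univ.erase j, Real.cot ((x j - x k) / 2)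

/-- `φ_a^j := (a/4) φ^j`. -/
def phiA {n : ℕ} (a : ℝ) (x : Fin n → ℝ) (j : Fin n) : ℝ := a / 4 * phi x j

/-- Absolute continuity of every coordinate of `θ` on `[0, T]`: each component is the
integral of a (locally) integrable function. -/
def AbsCont {n : ℕ} (T : ℝ) (θ : ℝ → Fin n → ℝ) : Prop :=
  ∃ v : ℝ → Fin n → ℝ, (∀ j, IntegrableOn (fun s => v s j) (Icc 0 T)) ∧
    ∀ t ∈ Icc (0 : ℝ) T, ∀ j, θ t j = θ 0 j + ∫ s in (0 : ℝ)..t, v s j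

/-- Truncated multiradial Dirichlet energy `J_T(θ)`. -/
def mEnergy (n : ℕ) (T : ℝ) (θ : ℝ → Fin n → ℝ) : ℝ≥0∞ :=
  if AbsCont T θ then
    ENNReal.ofReal (1 / 2) *
      ∫⁻ s in Ioc (0 : ℝ) T,
        ENNReal.ofReal (∑ j, (deriv (fun t => θ t j) s - 2 * phi (θ s) j) ^ 2)
  else ⊤

/-- Multiradial Dirichlet energy `J(θ) = lim_{T→∞} J_T(θ)`, the supremum of the
nondecreasing family `J_T(θ)`. -/
def mEnergyInf (n : ℕ) (θ : ℝ → Fin n → ℝ) : ℝ≥0∞ := ⨆ T : ℝ, mEnergy n T θ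

/-- A time change: `τ` is an inverse of `σ : [0,S] → [0,T]`, a strictly increasing continuous
bijection with derivative in `[c, C]` at interior points. -/
structure IsTimeChange (σ σ' τ : ℝ → ℝ) (S T c C : ℝ) : Prop where
  pos : 0 < S
  map_zero : σ 0 = 0
  map_right : σ S = T
  strictMonoOn : StrictMonoOn σ (Icc 0 S)
  continuousOn : ContinuousOn σ (Icc 0 S)
  hasDerivAt : ∀ t ∈ Ioo (0 : ℝ) S, HasDerivAt σ (σ' t) t
  lower_pos : 0 < c
  lower : ∀ t ∈ Icc (0 : ℝ) S, c ≤ σ' t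
  upper : ∀ t ∈ Icc (0 : ℝ) S, σ' t ≤ C
  inv_mem : ∀ t ∈ Icc (0 : ℝ) T, τ t ∈ Icc 0 S
  apply_inv : ∀ t ∈ Icc (0 : ℝ) T, σ (τ t) = t

namespace IsTimeChange

variable {σ σ' τ : ℝ → ℝ} {S T c C : ℝ}

lemma mapsTo (h : IsTimeChange σ σ' τ S T c C) : MapsTo σ (Icc 0 S) (Icc 0 T) := by
  have := h.strictMonoOn.monotoneOn.image_Icc_subset
  rw [h.map_zero, h.map_right] at this
  exact mapsTo_iff_image_subset.2 this

lemma image_Ioo (h : IsTimeChange σ σ' τ S T c C) : σ '' Ioo 0 S = Ioo 0 T := by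
  rw [h.continuousOn.image_Ioo_of_strictMonoOn h.pos.le h.strictMonoOn, h.map_zero, h.map_right]

lemma inv_apply (h : IsTimeChange σ σ' τ S T c C) {s : ℝ} (hs : s ∈ Icc 0 S) : τ (σ s) = s :=
  h.strictMonoOn.injOn (h.inv_mem _ (h.mapsTo hs)) hs (h.apply_inv _ (h.mapsTo hs))

lemma deriv_pos (h : IsTimeChange σ σ' τ S T c C) {s : ℝ} (hs : s ∈ Icc 0 S) : 0 < σ' s :=
  h.lower_pos.trans_le (h.lower s hs)

lemma mul_abs_sub_le (h : IsTimeChange σ σ' τ S T c C) {x y : ℝ} (hx : x ∈ Icc 0 S)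
    (hy : y ∈ Icc 0 S) : c * |y - x| ≤ |σ y - σ x| := by
  have key : ∀ x ∈ Icc 0 S, ∀ y ∈ Icc 0 S, x ≤ y → c * (y - x) ≤ σ y - σ x := by
    refine (convex_Icc 0 S).mul_sub_le_image_sub_of_le_deriv h.continuousOn ?_ ?_ <;>
      rw [interior_Icc]
    · exact fun t ht => (h.hasDerivAt t ht).differentiableAt.differentiableWithinAt
    · intro t ht
      rw [(h.hasDerivAt t ht).deriv]
      exact h.lower t (Ioo_subset_Icc_self ht)
  rcases le_total x y with hxy | hxy
  · rw [abs_of_nonneg (sub_nonneg.2 hxy)]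
    exact (key x hx y hy hxy).trans (le_abs_self _)
  · rw [abs_sub_comm, abs_of_nonneg (sub_nonneg.2 hxy), abs_sub_comm (σ y)]
    exact (key y hy x hx hxy).trans (le_abs_self _)

lemma continuousOn_inv (h : IsTimeChange σ σ' τ S T c C) : ContinuousOn τ (Icc 0 T) := by
  refine (LipschitzOnWith.of_dist_le_mul (K := ⟨c⁻¹, (inv_pos.2 h.lower_pos).le⟩) ?_).continuousOn
  intro x hx y hy
  have := h.mul_abs_sub_le (h.inv_mem y hy) (h.inv_mem x hx)
  rw [h.apply_inv x hx, h.apply_inv y hy] at this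
  exact (le_inv_mul_iff₀ h.lower_pos).2 this

lemma hasDerivAt_inv (h : IsTimeChange σ σ' τ S T c C) {s : ℝ} (hs : s ∈ Ioo 0 S) :
    HasDerivAt τ (σ' s)⁻¹ (σ s) := by
  have hT : Icc 0 T ∈ 𝓝 (σ s) :=
    mem_of_superset (isOpen_Ioo.mem_nhds (h.image_Ioo ▸ mem_image_of_mem σ hs)) Ioo_subset_Icc_self
  have hs' := Ioo_subset_Icc_self hs
  refine HasDerivAt.of_local_left_inverse (h.continuousOn_inv.continuousAt hT) ?_
    (h.deriv_pos hs').ne' (mem_of_superset hT h.apply_inv)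
  rw [h.inv_apply hs']
  exact h.hasDerivAt s hs

/-- The chain rule holds even where `f` is not differentiable, as `σ` is locally invertible. -/
lemma deriv_comp (h : IsTimeChange σ σ' τ S T c C) (f : ℝ → ℝ) {s : ℝ} (hs : s ∈ Ioo 0 S) :
    deriv (fun t => f (σ t)) s = deriv f (σ s) * σ' s := by
  have hs' := Ioo_subset_Icc_self hs
  by_cases hf : DifferentiableAt ℝ f (σ s)
  · exact (hf.hasDerivAt.comp s (h.hasDerivAt s hs)).deriv
  rw [deriv_zero_of_not_differentiableAt hf, zero_mul]
  refine deriv_zero_of_not_differentiableAt fun hd => hf ?_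
  have hcomp : DifferentiableAt ℝ ((fun t => f (σ t)) ∘ τ) (σ s) := by
    refine DifferentiableAt.comp _ ?_ (h.hasDerivAt_inv hs).differentiableAt
    rwa [h.inv_apply hs']
  refine hcomp.congr_of_eventuallyEq ?_
  filter_upwards [isOpen_Ioo.mem_nhds (h.image_Ioo ▸ mem_image_of_mem σ hs : σ s ∈ Ioo 0 T)]
    with t ht
  simp [h.apply_inv t (Ioo_subset_Icc_self ht)]

lemma integrableOn_iff (h : IsTimeChange σ σ' τ S T c C) (v : ℝ → ℝ) :
    IntegrableOn (fun s => σ' s * v (σ s)) (Icc 0 S) ↔ IntegrableOn v (Icc 0 T) := by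
  have := integrableOn_Icc_deriv_smul_iff_of_deriv_nonneg (g := v) h.continuousOn h.hasDerivAt
    (fun t ht => (h.deriv_pos (Ioo_subset_Icc_self ht)).le) h.pos.le
  simpa only [h.map_zero, h.map_right, smul_eq_mul] using this

lemma intervalIntegral_eq (h : IsTimeChange σ σ' τ S T c C) (v : ℝ → ℝ) {t : ℝ}
    (ht : t ∈ Icc 0 S) :
    ∫ s in (0 : ℝ)..t, σ' s * v (σ s) = ∫ u in (0 : ℝ)..σ t, v u := by
  have hsub : Ioo 0 t ⊆ Ioo 0 S := Ioo_subset_Ioo_right ht.2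
  have := integral_Icc_deriv_smul_of_deriv_nonneg (g := v)
    (h.continuousOn.mono (Icc_subset_Icc_right ht.2)) (fun x hx => h.hasDerivAt x (hsub hx))
    (fun x hx => (h.deriv_pos (Ioo_subset_Icc_self (hsub hx))).le) ht.1
  rw [intervalIntegral.integral_of_le ht.1, intervalIntegral.integral_of_le (h.mapsTo ht).1,
    ← integral_Icc_eq_integral_Ioc, ← integral_Icc_eq_integral_Ioc]
  simpa only [h.map_zero, smul_eq_mul] using this

lemma absCont_iff (h : IsTimeChange σ σ' τ S T c C) {n : ℕ} (θ : ℝ → Fin n → ℝ) :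
    AbsCont T θ ↔ AbsCont S (fun t => θ (σ t)) := by
  constructor
  · rintro ⟨v, hv, hθ⟩
    refine ⟨fun s j => σ' s * v (σ s) j, fun j => (h.integrableOn_iff _).2 (hv j), ?_⟩
    intro t ht j
    simp only [h.intervalIntegral_eq (fun s => v s j) ht, h.map_zero]
    exact hθ _ (h.mapsTo ht) j
  · rintro ⟨w, hw, hθ⟩
    let v : ℝ → Fin n → ℝ := fun u j => w (τ u) j / σ' (τ u)
    have hvw : ∀ j, ∀ s ∈ Icc 0 S, σ' s * v (σ s) j = w s j := by
      intro j s hs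
      simp only [v, h.inv_apply hs]
      exact mul_div_cancel₀ _ (h.deriv_pos hs).ne'
    refine ⟨v, fun j => (h.integrableOn_iff _).1 ?_, fun t ht j => ?_⟩
    · exact (hw j).congr_fun (fun s hs => (hvw j s hs).symm) measurableSet_Icc
    · have hτ := h.inv_mem t ht
      have hint := h.intervalIntegral_eq (fun u => v u j) hτ
      have hθt := hθ (τ t) hτ j
      simp only [h.apply_inv t ht, h.map_zero] at hint hθt
      rw [hθt, ← hint]
      congr 1
      refine intervalIntegral.integral_congr fun s hs => (hvw j s ?_).symm
      rw [uIcc_of_le hτ.1] at hs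
      exact ⟨hs.1, hs.2.trans hτ.2⟩

lemma lintegral_deriv_sq_lt_top_iff (h : IsTimeChange σ σ' τ S T c C) {n : ℕ}
    (θ : ℝ → Fin n → ℝ) :
    ∫⁻ u in Ioo 0 T, ENNReal.ofReal (∑ j, deriv (fun t => θ t j) u ^ 2) < ⊤ ↔
      ∫⁻ s in Ioo 0 S, ENNReal.ofReal (∑ j, deriv (fun t => θ (σ t) j) s ^ 2) < ⊤ := by
  have hchange : ∫⁻ u in Ioo 0 T, ENNReal.ofReal (∑ j, deriv (fun t => θ t j) u ^ 2) =
      ∫⁻ s in Ioo 0 S, ENNReal.ofReal (σ' s * ∑ j, deriv (fun t => θ t j) (σ s) ^ 2) := by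
    rw [← h.image_Ioo, lintegral_image_eq_lintegral_abs_deriv_mul measurableSet_Ioo
      (fun s hs => (h.hasDerivAt s hs).hasDerivWithinAt)
      (h.strictMonoOn.injOn.mono Ioo_subset_Icc_self)]
    refine setLIntegral_congr_fun measurableSet_Ioo fun s hs => ?_
    have := (h.deriv_pos (Ioo_subset_Icc_self hs)).le
    simp only [abs_of_nonneg this, ENNReal.ofReal_mul this]
  have hsum : ∀ s ∈ Ioo 0 S, ∑ j, deriv (fun t => θ (σ t) j) s ^ 2 =
      σ' s * (σ' s * ∑ j, deriv (fun t => θ t j) (σ s) ^ 2) := by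
    intro s hs
    simp only [Finset.mul_sum]
    refine Finset.sum_congr rfl fun j _ => ?_
    rw [h.deriv_comp (fun u => θ u j) hs]
    ring
  have hnonneg : ∀ s ∈ Ioo 0 S, 0 ≤ σ' s * ∑ j, deriv (fun t => θ t j) (σ s) ^ 2 :=
    fun s hs => mul_nonneg (h.deriv_pos (Ioo_subset_Icc_self hs)).le
      (Finset.sum_nonneg fun j _ => sq_nonneg _)
  rw [hchange]
  constructor
  · intro hfin
    refine lt_of_le_of_lt (setLIntegral_mono' measurableSet_Ioo (g := fun s => ENNReal.ofReal C *
      ENNReal.ofReal (σ' s * ∑ j, deriv (fun t => θ t j) (σ s) ^ 2)) fun s hs => ?_) ?_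
    · rw [hsum s hs, ENNReal.ofReal_mul (h.deriv_pos (Ioo_subset_Icc_self hs)).le]
      gcongr
      exact h.upper s (Ioo_subset_Icc_self hs)
    · rw [lintegral_const_mul' _ _ ENNReal.ofReal_ne_top]
      exact ENNReal.mul_lt_top ENNReal.ofReal_lt_top hfin
  · intro hfin
    refine lt_of_le_of_lt (setLIntegral_mono' measurableSet_Ioo (g := fun s => ENNReal.ofReal c⁻¹ *
      ENNReal.ofReal (∑ j, deriv (fun t => θ (σ t) j) s ^ 2)) fun s hs => ?_) ?_
    · rw [← ENNReal.ofReal_mul (inv_pos.2 h.lower_pos).le]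
      refine ENNReal.ofReal_le_ofReal ((le_inv_mul_iff₀ h.lower_pos).2 ?_)
      rw [hsum s hs]
      exact mul_le_mul_of_nonneg_right (h.lower s (Ioo_subset_Icc_self hs)) (hnonneg s hs)
    · rw [lintegral_const_mul' _ _ ENNReal.ofReal_ne_top]
      exact ENNReal.mul_lt_top ENNReal.ofReal_lt_top hfin

end IsTimeChange

/-- A strictly increasing differentiable bijection with derivative bounded away from `0` and `∞`
has an inverse making it a time change. -/
lemma exists_isTimeChange {σ σ' : ℝ → ℝ} {S T c C : ℝ} (hS : 0 < S) (hσ0 : σ 0 = 0)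
    (hσS : σ S = T) (hmono : StrictMonoOn σ (Icc 0 S))
    (hderiv : ∀ t ∈ Icc (0 : ℝ) S, HasDerivWithinAt σ (σ' t) (Icc 0 S) t) (hc : 0 < c)
    (hlow : ∀ t ∈ Icc (0 : ℝ) S, c ≤ σ' t) (hup : ∀ t ∈ Icc (0 : ℝ) S, σ' t ≤ C) :
    ∃ τ, IsTimeChange σ σ' τ S T c C := by
  have hcont : ContinuousOn σ (Icc 0 S) := fun t ht => (hderiv t ht).continuousWithinAt
  have himage : σ '' Icc 0 S = Icc 0 T := by
    rw [hcont.image_Icc_of_monotoneOn hS.le hmono.monotoneOn, hσ0, hσS]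
  have hpre : ∀ t, ∃ s, t ∈ Icc 0 T → s ∈ Icc 0 S ∧ σ s = t := by
    intro t
    by_cases ht : t ∈ Icc 0 T
    · obtain ⟨s, hs⟩ := himage ▸ ht
      exact ⟨s, fun _ => hs⟩
    · exact ⟨0, fun h => absurd h ht⟩
  choose τ hτ using hpre
  exact ⟨τ, hS, hσ0, hσS, hmono, hcont, fun t ht => (hderiv t (Ioo_subset_Icc_self ht)).hasDerivAt
    (Icc_mem_nhds ht.1 ht.2), hc, hlow, hup, fun t ht => (hτ t ht).1, fun t ht => (hτ t ht).2⟩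

lemma sin_half_sub_ne_zero {n : ℕ} {x : Fin n → ℝ} (hx : x ∈ Xspace n) {j k : Fin n}
    (hjk : k ≠ j) : Real.sin ((x j - x k) / 2) ≠ 0 := by
  have hne : x j - x k ≠ 0 := sub_ne_zero.2 (hx.1.injective.ne hjk.symm)
  have h₁ := hx.2 j k
  have h₂ := hx.2 k j
  refine mt (Real.sin_eq_zero_iff_of_lt_of_lt (by linarith) (by linarith)).1 ?_
  exact div_ne_zero hne two_ne_zero

lemma continuousOn_phi {n : ℕ} (j : Fin n) : ContinuousOn (fun x => phi x j) (Xspace n) := by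
  unfold phi
  refine continuousOn_finsetSum _ fun k hk => ?_
  simp only [Real.cot_eq_cos_div_sin]
  exact ContinuousOn.div (by fun_prop) (by fun_prop)
    fun x hx => sin_half_sub_ne_zero hx (Finset.ne_of_mem_erase hk)

lemma exists_phi_sq_bound {n : ℕ} {T : ℝ} {θ : ℝ → Fin n → ℝ}
    (hcont : ContinuousOn θ (Icc 0 T)) (hX : ∀ t ∈ Icc (0 : ℝ) T, θ t ∈ Xspace n) :
    ∃ K, ∀ t ∈ Icc 0 T, ∑ j, (2 * phi (θ t) j) ^ 2 ≤ K := by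
  have : ContinuousOn (fun t => ∑ j, (2 * phi (θ t) j) ^ 2) (Icc 0 T) :=
    continuousOn_finsetSum _ fun j _ =>
      (((continuousOn_phi j).comp hcont hX).const_smul (2 : ℝ)).pow 2
  obtain ⟨K, hK⟩ := isCompact_Icc.exists_bound_of_continuousOn this
  exact ⟨K, fun t ht => (le_abs_self _).trans (hK t ht)⟩

lemma lintegral_lt_top_of_le_two_mul_add {T K : ℝ} {f g : ℝ → ℝ}
    (hfg : ∀ t ∈ Ioo 0 T, f t ≤ 2 * g t + K)
    (hg : ∫⁻ t in Ioo 0 T, ENNReal.ofReal (g t) < ⊤) :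
    ∫⁻ t in Ioo 0 T, ENNReal.ofReal (f t) < ⊤ := by
  refine lt_of_le_of_lt (setLIntegral_mono' measurableSet_Ioo (g := fun t =>
    2 * ENNReal.ofReal (g t) + ENNReal.ofReal K) fun t ht => ?_) ?_
  · refine (ENNReal.ofReal_le_ofReal (hfg t ht)).trans (ENNReal.ofReal_add_le.trans_eq ?_)
    rw [ENNReal.ofReal_mul two_pos.le, ENNReal.ofReal_ofNat]
  · rw [lintegral_add_right _ measurable_const, lintegral_const_mul' _ _ ENNReal.ofNat_ne_top,
      setLIntegral_const, Real.volume_Ioo]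
    exact ENNReal.add_lt_top.2 ⟨ENNReal.mul_lt_top ENNReal.ofNat_lt_top hg,
      ENNReal.mul_lt_top ENNReal.ofReal_lt_top ENNReal.ofReal_lt_top⟩

/-- On a compact time interval the drift is bounded, so finite energy means square-integrable
derivative. -/
lemma mEnergy_lt_top_iff {n : ℕ} {T : ℝ} {θ : ℝ → Fin n → ℝ}
    (hcont : ContinuousOn θ (Icc 0 T)) (hX : ∀ t ∈ Icc (0 : ℝ) T, θ t ∈ Xspace n) :
    mEnergy n T θ < ⊤ ↔ AbsCont T θ ∧
      ∫⁻ s in Ioo 0 T, ENNReal.ofReal (∑ j, deriv (fun t => θ t j) s ^ 2) < ⊤ := by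
  obtain ⟨K, hK⟩ := exists_phi_sq_bound hcont hX
  unfold mEnergy
  split_ifs with hac
  swap
  · simp [hac]
  have hhalf : ENNReal.ofReal (1 / 2) ≠ 0 := by simp
  rw [ENNReal.mul_lt_top_iff]
  simp only [hac, true_and, ENNReal.ofReal_lt_top, hhalf, false_or, setLIntegral_congr
    Ioo_ae_eq_Ioc.symm]
  rw [or_iff_left_of_imp fun h => h ▸ ENNReal.zero_lt_top]
  constructor
  · refine lintegral_lt_top_of_le_two_mul_add (K := 2 * K) fun t ht => ?_
    refine le_trans ?_ (add_le_add_right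
      (mul_le_mul_of_nonneg_left (hK t (Ioo_subset_Icc_self ht)) two_pos.le) _)
    rw [Finset.mul_sum, Finset.mul_sum, ← Finset.sum_add_distrib]
    refine Finset.sum_le_sum fun j _ => ?_
    nlinarith [sq_nonneg (deriv (fun t => θ t j) t - 4 * phi (θ t) j)]
  · refine lintegral_lt_top_of_le_two_mul_add (K := 2 * K) fun t ht => ?_
    refine le_trans ?_ (add_le_add_right
      (mul_le_mul_of_nonneg_left (hK t (Ioo_subset_Icc_self ht)) two_pos.le) _)
    rw [Finset.mul_sum, Finset.mul_sum, ← Finset.sum_add_distrib]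
    refine Finset.sum_le_sum fun j _ => ?_
    nlinarith [sq_nonneg (deriv (fun t => θ t j) t + 2 * phi (θ t) j)]

/-- Finiteness of the multiradial Dirichlet energy is preserved under
time changes `σ : [0,S] → [0,T]` which are strictly increasing differentiable bijections
with `σ(0) = 0` and derivative bounded away from `0` and `∞`. -/
theorem mEnergy_finite_iff_time_change
    (n : ℕ) (hn : 1 ≤ n) (T S : ℝ) (hT : 0 < T) (hS : 0 < S)
    (σ σ' : ℝ → ℝ)
    (hσ0 : σ 0 = 0) (hσS : σ S = T)
    (hmono : StrictMonoOn σ (Icc 0 S))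
    (hderiv : ∀ t ∈ Icc (0 : ℝ) S, HasDerivWithinAt σ (σ' t) (Icc 0 S) t)
    (hlow : ∃ c : ℝ, 0 < c ∧ ∀ t ∈ Icc (0 : ℝ) S, c ≤ σ' t)
    (hup : ∃ C : ℝ, ∀ t ∈ Icc (0 : ℝ) S, σ' t ≤ C)
    (θ : ℝ → Fin n → ℝ)
    (hcont : ContinuousOn θ (Icc 0 T))
    (hX : ∀ t ∈ Icc (0 : ℝ) T, θ t ∈ Xspace n) :
    mEnergy n T θ < ⊤ ↔ mEnergy n S (fun t => θ (σ t)) < ⊤ := by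
  obtain ⟨c, hc, hlow⟩ := hlow
  obtain ⟨C, hup⟩ := hup
  obtain ⟨τ, h⟩ := exists_isTimeChange hS hσ0 hσS hmono hderiv hc hlow hup
  rw [mEnergy_lt_top_iff hcont hX, mEnergy_lt_top_iff (θ := fun t => θ (σ t))
    (hcont.comp h.continuousOn h.mapsTo) fun t ht => hX _ (h.mapsTo ht)]
  exact and_congr (h.absCont_iff θ) (h.lintegral_deriv_sq_lt_top_iff θ)

end
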